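/- Let f = p/q be a rational function of two real variables bounded near (x₀,y₀), and let Φ be a function of type (i). Then q(x, y₀+Φ(x−x₀)) ≠ 0 for all x ≠ x₀ sufficiently close to x₀, and both one-sided limits lim_{x→x₀⁺} f(x, y₀+Φ(x−x₀)) and lim_{x→x₀⁻} f(x, y₀+Φ(x−x₀)) exist and are finite. -/

import Mathlib

open MvPolynomial Filter Topology

/-- Evaluation of a two-variable real polynomial at a point of `ℝ²`. -/
noncomputable def pev (p : MvPolynomial (Fin 2) ℝ) (v : ℝ × ℝ) : ℝ :=
  MvPolynomial.eval ![v.1, v.2] p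

/-- `p/q` is bounded near `v₀`. -/
def BoundedNear (p q : MvPolynomial (Fin 2) ℝ) (v₀ : ℝ × ℝ) : Prop :=
  ∃ U ∈ nhds v₀, ∃ M : ℝ, ∀ v ∈ U, pev q v ≠ 0 → |pev p v / pev q v| ≤ M

/-- `Φ` is a function of type (i). -/
def TypeI (Φ : ℝ → ℝ) : Prop :=
  ∃ (N : ℕ) (φ : Fin N → ℝ) (e : Fin N → ℚ),
    (∀ k, φ k ≠ 0) ∧ StrictMono e ∧ (∀ k, 1 ≤ e k) ∧
    ∀ t : ℝ, Φ t = ∑ k, φ k * |t| ^ ((e k : ℝ))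

open Polynomial in
lemma gauss_coprime {R : Type*} [CommRing R] [IsDomain R] [UniqueFactorizationMonoid R]
    (P Q : R[X]) (hQ : Q ≠ 0) (h : ∀ d, d ∣ P → d ∣ Q → IsUnit d) :
    ∃ (A B : R[X]) (c : R), c ≠ 0 ∧ A * P + B * Q = Polynomial.C c := by
  classical
  let K := FractionRing R
  have hinj : Function.Injective (algebraMap R K) := IsFractionRing.injective R K
  have hcop : IsCoprime (P.map (algebraMap R K)) (Q.map (algebraMap R K)) := by
    rw [← EuclideanDomain.gcd_isUnit_iff]
    set g := EuclideanDomain.gcd (P.map (algebraMap R K)) (Q.map (algebraMap R K)) with hg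
    have hg0 : g ≠ 0 := by
      intro h0
      have := (EuclideanDomain.gcd_eq_zero_iff.1 h0).2
      exact hQ ((Polynomial.map_eq_zero_iff hinj).1 this)
    let : NormalizedGCDMonoid R := Classical.arbitrary _
    apply isUnit_or_eq_zero_of_isUnit_integerNormalization_primPart (R := R) hg0
    set G := IsLocalization.integerNormalization (nonZeroDivisors R) g with hG
    obtain ⟨c, hc, hcG⟩ := IsLocalization.integerNormalization_spec (nonZeroDivisors R) g
    have hdg : G.primPart.map (algebraMap R K) ∣ g := by
      have h1 : G.primPart.map (algebraMap R K) ∣ c • g := by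
        rw [← hcG]
        exact Polynomial.map_dvd _ (Polynomial.primPart_dvd _)
      rw [Algebra.smul_def, Polynomial.algebraMap_apply] at h1
      refine (IsUnit.dvd_mul_left ?_).1 h1
      rw [Polynomial.isUnit_C, isUnit_iff_ne_zero]
      exact fun h0 => nonZeroDivisors.ne_zero hc ((map_eq_zero_iff _ hinj).1 h0)
    apply h
    · exact G.isPrimitive_primPart.dvd_of_fraction_map_dvd_fraction_map
        (hdg.trans (EuclideanDomain.gcd_dvd_left _ _))
    · exact G.isPrimitive_primPart.dvd_of_fraction_map_dvd_fraction_map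
        (hdg.trans (EuclideanDomain.gcd_dvd_right _ _))
  obtain ⟨a, b, hab⟩ := hcop
  obtain ⟨c, hc, hcA⟩ := IsLocalization.integerNormalization_spec (nonZeroDivisors R) a
  obtain ⟨d, hd, hdB⟩ := IsLocalization.integerNormalization_spec (nonZeroDivisors R) b
  refine ⟨Polynomial.C d * IsLocalization.integerNormalization (nonZeroDivisors R) a,
    Polynomial.C c * IsLocalization.integerNormalization (nonZeroDivisors R) b, c * d,
    mul_ne_zero (nonZeroDivisors.ne_zero hc) (nonZeroDivisors.ne_zero hd), ?_⟩
  apply Polynomial.map_injective _ hinj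
  rw [Algebra.smul_def, Polynomial.algebraMap_apply] at hcA hdB
  simp only [Polynomial.map_add, Polynomial.map_mul, hcA, hdB, Polynomial.map_C, map_mul]
  linear_combination (Polynomial.C (algebraMap R K c) * Polynomial.C (algebraMap R K d)) * hab

lemma poly_ne_near (r : Polynomial ℝ) (hr : r ≠ 0) (a : ℝ) : ∀ᶠ t in 𝓝[≠] a, r.eval t ≠ 0 := by
  have hfin : {t | r.IsRoot t}.Finite := Polynomial.finite_setOfPred_isRoot hr
  have h2 : (({t | r.IsRoot t} \ {a}) : Set ℝ)ᶜ ∈ 𝓝 a :=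
    (hfin.subset Set.sdiff_subset).isClosed.isOpen_compl.mem_nhds (by simp)
  filter_upwards [mem_nhdsWithin_of_mem_nhds h2, self_mem_nhdsWithin] with t ht hta h0
  exact ht ⟨h0, hta⟩

lemma pev_curve (q : MvPolynomial (Fin 2) ℝ) (A B : Polynomial ℝ) (t : ℝ) :
    (MvPolynomial.aeval ![A, B] q).eval t = pev q (A.eval t, B.eval t) := by
  induction q using MvPolynomial.induction_on with
  | C a => simp [pev]
  | add p q hp hq => simp only [pev, map_add, Polynomial.eval_add] at *; rw [hp, hq]
  | mul_X p i hp =>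
    simp only [pev, map_mul, Polynomial.eval_mul] at *
    rw [hp]; fin_cases i <;> simp

lemma uni_curve (q : MvPolynomial (Fin 1) ℝ) (A : Polynomial ℝ) (t : ℝ) :
    (MvPolynomial.aeval ![A] q).eval t = MvPolynomial.eval ![A.eval t] q := by
  induction q using MvPolynomial.induction_on with
  | C a => simp
  | add p q hp hq => simp only [map_add, Polynomial.eval_add] at *; rw [hp, hq]
  | mul_X p i hp =>
    simp only [map_mul, Polynomial.eval_mul] at *
    rw [hp]; fin_cases i; simp

lemma exists_elim (p q : MvPolynomial (Fin 2) ℝ) (hq : q ≠ 0)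
    (hcop : ∀ d : MvPolynomial (Fin 2) ℝ, d ∣ p → d ∣ q → IsUnit d) :
    ∃ D : Polynomial ℝ, D ≠ 0 ∧ ∀ x y, pev p (x, y) = 0 → pev q (x, y) = 0 → D.eval x = 0 := by
  let e : MvPolynomial (Fin 2) ℝ ≃ₐ[ℝ] Polynomial (MvPolynomial (Fin 1) ℝ) :=
    (MvPolynomial.renameEquiv ℝ (Equiv.swap (0 : Fin 2) 1)).trans (MvPolynomial.finSuccEquiv ℝ 1)
  have he : ∀ (f : MvPolynomial (Fin 2) ℝ) (x y : ℝ),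
      pev f (x, y) = Polynomial.eval y (Polynomial.map (MvPolynomial.eval ![x]) (e f)) := by
    intro f x y
    have := MvPolynomial.eval_eq_eval_mv_eval' ![x] y
      (MvPolynomial.rename (Equiv.swap (0 : Fin 2) 1) f)
    simp only [e, AlgEquiv.trans_apply, MvPolynomial.renameEquiv_apply]
    rw [← this, MvPolynomial.eval_rename, pev]
    congr 2
    funext i
    fin_cases i <;> simp
  obtain ⟨A, B, c, hc, hAB⟩ := gauss_coprime (e p) (e q) (by simpa using hq) (by
    intro d h1 h2
    have h1' : e.symm d ∣ p := by simpa using map_dvd e.symm h1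
    have h2' : e.symm d ∣ q := by simpa using map_dvd e.symm h2
    simpa using (hcop _ h1' h2').map e)
  refine ⟨MvPolynomial.aeval ![Polynomial.X] c, ?_, ?_⟩
  · intro h0
    apply hc
    apply MvPolynomial.funext
    intro v
    have := uni_curve c Polynomial.X (v 0)
    rw [h0] at this
    have hv : v = ![v 0] := by funext i; fin_cases i; rfl
    rw [hv]; simpa using this.symm
  · intro x y hp hq
    rw [he] at hp hq
    have := congrArg (fun f => Polynomial.eval y (Polynomial.map (MvPolynomial.eval ![x]) f)) hAB
    simp only [Polynomial.map_add, Polynomial.map_mul, Polynomial.eval_add, Polynomial.eval_mul,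
      hp, hq, Polynomial.map_C, Polynomial.eval_C] at this
    rw [uni_curve]; simpa using this.symm

lemma pev_cont (p : MvPolynomial (Fin 2) ℝ) : Continuous (pev p) := by
  unfold pev
  apply (MvPolynomial.continuous_eval p).comp
  apply continuous_pi
  intro i
  fin_cases i
  · exact continuous_fst
  · exact continuous_snd

lemma bound_everywhere (p q : MvPolynomial (Fin 2) ℝ) (hq : q ≠ 0) (v₀ : ℝ × ℝ)
    (hb : BoundedNear p q v₀) : ∃ M : ℝ, ∀ᶠ v in 𝓝 v₀, |pev p v| ≤ M * |pev q v| := by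
  obtain ⟨U, hU, M, hM⟩ := hb
  refine ⟨M, ?_⟩
  obtain ⟨w, hw⟩ : ∃ w : ℝ × ℝ, pev q w ≠ 0 := by
    by_contra! hcon
    apply hq
    apply MvPolynomial.funext
    intro v
    have hv : v = ![v 0, v 1] := by funext i; fin_cases i <;> rfl
    rw [hv]; simpa [pev] using hcon (v 0, v 1)
  filter_upwards [eventually_eventually_nhds.2 (show ∀ᶠ v in 𝓝 v₀, v ∈ U from hU)] with v hv
  let A : Polynomial ℝ := Polynomial.C v.1 + Polynomial.C (w.1 - v.1) * Polynomial.X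
  let B : Polynomial ℝ := Polynomial.C v.2 + Polynomial.C (w.2 - v.2) * Polynomial.X
  have hr : MvPolynomial.aeval ![A, B] q ≠ 0 := by
    intro h0
    have := pev_curve q A B 1
    rw [h0] at this
    apply hw
    simpa [A, B] using this.symm
  let γ : ℝ → ℝ × ℝ := fun t => (A.eval t, B.eval t)
  have hγ : Continuous γ := A.continuous.prodMk B.continuous
  have hγ0 : Tendsto γ (𝓝[≠] 0) (𝓝 v) := by
    have : Tendsto γ (𝓝 0) (𝓝 (γ 0)) := hγ.tendsto 0
    have h2 : γ 0 = v := by simp [γ, A, B]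
    rw [h2] at this
    exact this.mono_left nhdsWithin_le_nhds
  refine le_of_tendsto_of_tendsto (((pev_cont p).tendsto v).comp hγ0).abs
    ((((pev_cont q).tendsto v).comp hγ0).abs.const_mul M) ?_
  filter_upwards [poly_ne_near _ hr 0, hγ0.eventually hv] with t ht htU
  rw [pev_curve] at ht
  have := hM _ htU ht
  rw [abs_div, div_le_iff₀ (abs_pos.2 ht)] at this
  exact this

lemma ratio_limit (P Q : Polynomial ℝ) (M : ℝ) (hQ : Q ≠ 0)
    (h : ∀ᶠ s in 𝓝[>] (0 : ℝ), |P.eval s| ≤ M * |Q.eval s|) :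
    ∃ L, Tendsto (fun s => P.eval s / Q.eval s) (𝓝[>] (0 : ℝ)) (𝓝 L) := by
  classical
  obtain ⟨P', hP'⟩ := EuclideanDomain.gcd_dvd_left P Q
  obtain ⟨Q', hQ'⟩ := EuclideanDomain.gcd_dvd_right P Q
  set g := EuclideanDomain.gcd P Q with hg
  have hg0 : g ≠ 0 := fun h0 => hQ (by rw [hQ', h0, zero_mul])
  have hgne : ∀ᶠ s in 𝓝[>] (0 : ℝ), g.eval s ≠ 0 :=
    (poly_ne_near g hg0 0).filter_mono (nhdsWithin_mono _ fun x hx => ne_of_gt hx)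
  have hcop : P'.eval 0 = 0 → Q'.eval 0 = 0 → False := by
    intro h1 h2
    have hb := EuclideanDomain.gcd_eq_gcd_ab P Q
    rw [← hg] at hb
    have : g * 1 = g * (P' * EuclideanDomain.gcdA P Q + Q' * EuclideanDomain.gcdB P Q) := by
      conv_lhs => rw [mul_one, hb]
      conv_lhs => rw [show P * EuclideanDomain.gcdA P Q + Q * EuclideanDomain.gcdB P Q =
        (g * P') * EuclideanDomain.gcdA P Q + (g * Q') * EuclideanDomain.gcdB P Q by
          rw [← hP', ← hQ']]
      ring
    have := congrArg (Polynomial.eval 0) (mul_left_cancel₀ hg0 this)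
    simp [h1, h2] at this
  have hev : ∀ s, P.eval s = g.eval s * P'.eval s ∧ Q.eval s = g.eval s * Q'.eval s := by
    intro s
    constructor
    · conv_lhs => rw [hP', Polynomial.eval_mul]
    · conv_lhs => rw [hQ', Polynomial.eval_mul]
  have h' : |P'.eval 0| ≤ M * |Q'.eval 0| := by
    have t1 : Tendsto (fun s => |P'.eval s|) (𝓝[>] (0 : ℝ)) (𝓝 |P'.eval 0|) :=
      ((P'.continuous.tendsto 0).mono_left nhdsWithin_le_nhds).abs
    have t2 : Tendsto (fun s => M * |Q'.eval s|) (𝓝[>] (0 : ℝ)) (𝓝 (M * |Q'.eval 0|)) :=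
      ((Q'.continuous.tendsto 0).mono_left nhdsWithin_le_nhds).abs.const_mul M
    refine le_of_tendsto_of_tendsto t1 t2 ?_
    filter_upwards [h, hgne] with s hs hgs
    rw [(hev s).1, (hev s).2, abs_mul, abs_mul] at hs
    have : 0 < |g.eval s| := abs_pos.2 hgs
    refine le_of_mul_le_mul_left ?_ this
    linarith
  have hQ0 : Q'.eval 0 ≠ 0 := by
    intro h0
    rw [h0] at h'
    simp at h'
    exact hcop h' h0
  refine ⟨P'.eval 0 / Q'.eval 0, ?_⟩
  refine Tendsto.congr' ?_ (((P'.continuous.tendsto 0).div (Q'.continuous.tendsto 0) hQ0).mono_left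
    nhdsWithin_le_nhds)
  filter_upwards [hgne] with s hgs
  rw [(hev s).1, (hev s).2]
  exact (mul_div_mul_left _ _ hgs).symm

lemma typeI_cont (Φ : ℝ → ℝ) (hΦ : TypeI Φ) : Continuous Φ ∧ Φ 0 = 0 := by
  obtain ⟨N, φ, e, -, -, he, hf⟩ := hΦ
  have he' : ∀ k, (1 : ℝ) ≤ (e k : ℝ) := fun k => by exact_mod_cast he k
  constructor
  · rw [show Φ = fun t => ∑ k, φ k * |t| ^ ((e k : ℝ)) from funext hf]
    refine continuous_finsetSum _ fun k _ => continuous_const.mul ?_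
    exact (Real.continuous_rpow_const (by linarith [he' k])).comp continuous_abs
  · rw [hf]
    refine Finset.sum_eq_zero fun k _ => ?_
    rw [abs_zero, Real.zero_rpow (by linarith [he' k]), mul_zero]

/-- After the substitution `|t| = s ^ n` a type (i) function becomes a polynomial in `s`. -/
lemma typeI_poly (Φ : ℝ → ℝ) (hΦ : TypeI Φ) : ∃ (n : ℕ) (B : Polynomial ℝ), 0 < n ∧
    ∀ t s : ℝ, 0 < s → |t| = s ^ n → Φ t = B.eval s := by
  obtain ⟨N, φ, e, -, -, he, hf⟩ := hΦ
  let n : ℕ := ∏ k, (e k).den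
  have hn : 0 < n := Finset.prod_pos fun k _ => (e k).den_pos
  have hm : ∀ k, ∃ m : ℕ, (n : ℝ) * (e k : ℝ) = (m : ℝ) := by
    intro k
    obtain ⟨c, hc⟩ : (e k).den ∣ n := Finset.dvd_prod_of_mem _ (Finset.mem_univ k)
    refine ⟨c * (e k).num.toNat, ?_⟩
    have h0 : 0 ≤ (e k).num := Rat.num_nonneg.2 (by linarith [he k])
    have h1 : (((e k).num.toNat : ℤ)) = (e k).num := Int.toNat_of_nonneg h0
    have h2 : (n : ℚ) * e k = ((c * (e k).num.toNat : ℕ) : ℚ) := by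
      have h3 : (((e k).num.toNat : ℕ) : ℚ) = ((e k).num : ℚ) := by exact_mod_cast h1
      have h4 := Rat.mul_den_eq_num (e k)
      rw [hc]; push_cast; rw [h3, ← h4]; ring
    exact_mod_cast h2
  choose m hm using hm
  refine ⟨n, ∑ k, Polynomial.C (φ k) * Polynomial.X ^ m k, hn, ?_⟩
  intro t s hs hts
  rw [hf, Polynomial.eval_finsetSum]
  refine Finset.sum_congr rfl fun k _ => ?_
  rw [hts, ← Real.rpow_natCast, ← Real.rpow_mul hs.le, hm, Real.rpow_natCast]
  simp

lemma side_limit (p q : MvPolynomial (Fin 2) ℝ) (x₀ y₀ : ℝ) (Φ : ℝ → ℝ) (hΦ : TypeI Φ) (M : ℝ)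
    (ε : ℝ) (hε : |ε| = 1) (l : Filter ℝ) (hl : l ≤ 𝓝[≠] x₀)
    (hlε : ∀ᶠ x in l, x - x₀ = ε * |x - x₀|)
    (hne : ∀ᶠ x in 𝓝[≠] x₀, pev q (x, y₀ + Φ (x - x₀)) ≠ 0)
    (hbd : ∀ᶠ x in 𝓝[≠] x₀,
      |pev p (x, y₀ + Φ (x - x₀))| ≤ M * |pev q (x, y₀ + Φ (x - x₀))|) :
    ∃ L : ℝ, Tendsto
      (fun x => pev p (x, y₀ + Φ (x - x₀)) / pev q (x, y₀ + Φ (x - x₀))) l (𝓝 L) := by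
  obtain ⟨n, B, hn, hB⟩ := typeI_poly Φ hΦ
  have hε0 : ε ≠ 0 := by intro h; simp [h] at hε
  let X1 : Polynomial ℝ := Polynomial.C x₀ + Polynomial.C ε * Polynomial.X ^ n
  let Y1 : Polynomial ℝ := Polynomial.C y₀ + B
  have hX : ∀ s, X1.eval s = x₀ + ε * s ^ n := fun s => by simp [X1]
  have hcurve : ∀ s, 0 < s → ∀ f : MvPolynomial (Fin 2) ℝ,
      (MvPolynomial.aeval ![X1, Y1] f).eval s
        = pev f (X1.eval s, y₀ + Φ (X1.eval s - x₀)) := by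
    intro s hs f
    rw [pev_curve, hB (X1.eval s - x₀) s hs (by
      rw [hX, add_sub_cancel_left, abs_mul, hε, one_mul, abs_of_pos (pow_pos hs n)])]
    simp [Y1]
  have hXt : Tendsto (fun s => X1.eval s) (𝓝[>] (0 : ℝ)) (𝓝[≠] x₀) := by
    refine tendsto_nhdsWithin_iff.2 ⟨?_, ?_⟩
    · have := X1.continuous.tendsto 0
      rw [hX, zero_pow hn.ne', mul_zero, add_zero] at this
      exact this.mono_left nhdsWithin_le_nhds
    · filter_upwards [self_mem_nhdsWithin] with s hs
      have hs' : (0 : ℝ) < s := hs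
      have : ε * s ^ n ≠ 0 := mul_ne_zero hε0 (pow_pos hs' n).ne'
      simpa [hX] using ⟨hε0, fun h => absurd h hs'.ne'⟩
  have hQ : MvPolynomial.aeval ![X1, Y1] q ≠ 0 := by
    intro h0
    obtain ⟨s, hs1, hs2⟩ := ((hXt.eventually hne).and
      (self_mem_nhdsWithin : ∀ᶠ s in 𝓝[>] (0 : ℝ), s ∈ Set.Ioi (0 : ℝ))).exists
    apply hs1
    rw [← hcurve s hs2 q, h0, Polynomial.eval_zero]
  obtain ⟨L, hL⟩ := ratio_limit (MvPolynomial.aeval ![X1, Y1] p) (MvPolynomial.aeval ![X1, Y1] q)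
    M hQ (by
      filter_upwards [hXt.eventually hbd, self_mem_nhdsWithin] with s hs1 hs2
      rw [hcurve s hs2, hcurve s hs2]
      exact hs1)
  refine ⟨L, ?_⟩
  have hpos : ∀ᶠ x in l, 0 < |x - x₀| := by
    filter_upwards [hl self_mem_nhdsWithin] with x hx
    exact abs_pos.2 (sub_ne_zero.2 hx)
  have hn' : (0 : ℝ) < (n : ℝ)⁻¹ := by positivity
  have hσ : Tendsto (fun x => |x - x₀| ^ ((n : ℝ)⁻¹)) l (𝓝[>] (0 : ℝ)) := by
    refine tendsto_nhdsWithin_iff.2 ⟨?_, ?_⟩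
    · have hc : Continuous (fun x : ℝ => |x - x₀| ^ ((n : ℝ)⁻¹)) :=
        (Real.continuous_rpow_const hn'.le).comp (continuous_abs.comp (continuous_id.sub
          continuous_const))
      have := hc.tendsto x₀
      simp only [sub_self, abs_zero, Real.zero_rpow hn'.ne'] at this
      exact this.mono_left (hl.trans nhdsWithin_le_nhds)
    · filter_upwards [hpos] with x hx
      exact Real.rpow_pos_of_pos hx _
  refine (hL.comp hσ).congr' ?_
  filter_upwards [hpos, hlε] with x hx hxε
  have hs : 0 < |x - x₀| ^ ((n : ℝ)⁻¹) := Real.rpow_pos_of_pos hx _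
  have hxx : X1.eval (|x - x₀| ^ ((n : ℝ)⁻¹)) = x := by
    rw [hX, Real.rpow_inv_natCast_pow hx.le hn.ne', ← hxε]; ring
  simp only [Function.comp_apply]
  rw [hcurve _ hs, hcurve _ hs, hxx]

/-- Along a type (i) curve through `(x₀,y₀)`, the denominator is eventually nonzero and
the one-sided limits of a rational function bounded near `(x₀,y₀)` exist and are finite. -/
theorem typeI_curve_limits (p q : MvPolynomial (Fin 2) ℝ) (hq : q ≠ 0)
    (hcop : ∀ d : MvPolynomial (Fin 2) ℝ, d ∣ p → d ∣ q → IsUnit d) (x₀ y₀ : ℝ)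
    (hb : BoundedNear p q (x₀, y₀)) (Φ : ℝ → ℝ) (hΦ : TypeI Φ) :
    (∀ᶠ x in 𝓝[≠] x₀, pev q (x, y₀ + Φ (x - x₀)) ≠ 0) ∧
    (∃ L : ℝ, Tendsto
      (fun x => pev p (x, y₀ + Φ (x - x₀)) / pev q (x, y₀ + Φ (x - x₀)))
      (𝓝[>] x₀) (𝓝 L)) ∧
    (∃ L : ℝ, Tendsto
      (fun x => pev p (x, y₀ + Φ (x - x₀)) / pev q (x, y₀ + Φ (x - x₀)))
      (𝓝[<] x₀) (𝓝 L)) := by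
  obtain ⟨hΦc, hΦ0⟩ := typeI_cont Φ hΦ
  obtain ⟨M, hM⟩ := bound_everywhere p q hq _ hb
  obtain ⟨D, hD0, hD⟩ := exists_elim p q hq hcop
  have hγ : Tendsto (fun x => (x, y₀ + Φ (x - x₀))) (𝓝[≠] x₀) (𝓝 (x₀, y₀)) := by
    have hc : Continuous (fun x => (x, y₀ + Φ (x - x₀))) := by fun_prop
    have := hc.tendsto x₀
    simp only [sub_self, hΦ0, add_zero] at this
    exact this.mono_left nhdsWithin_le_nhds
  have hbd := hγ.eventually hM
  have hne : ∀ᶠ x in 𝓝[≠] x₀, pev q (x, y₀ + Φ (x - x₀)) ≠ 0 := by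
    filter_upwards [hbd, poly_ne_near D hD0 x₀] with x hx hDx hq0
    refine hDx (hD x _ ?_ hq0)
    rw [hq0] at hx
    simpa using hx
  refine ⟨hne, ?_, ?_⟩
  · refine side_limit p q x₀ y₀ Φ hΦ M 1 (by simp) _
      (nhdsWithin_mono _ fun x hx => ne_of_gt hx) ?_ hne hbd
    filter_upwards [self_mem_nhdsWithin] with x hx
    rw [abs_of_pos (sub_pos.2 hx), one_mul]
  · refine side_limit p q x₀ y₀ Φ hΦ M (-1) (by simp) _
      (nhdsWithin_mono _ fun x hx => ne_of_lt hx) ?_ hne hbd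
    filter_upwards [self_mem_nhdsWithin] with x hx
    rw [abs_of_neg (sub_neg.2 hx)]; ring
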